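/- Suppose y > 0, 0 ≤ α < 2π, and 0 < K < 1. Let P⁺ be the set of primes p such that cos(y·ln p + α) > K, and let P⁻ be the set of primes p such that cos(y·ln p + α) < -K. Then Σ_{p ∈ P⁺} 1/p = ∞ and Σ_{p ∈ P⁻} 1/p = ∞; that is, the function p ↦ 1/p is not summable over P⁺ and not summable over P⁻. -/

import Mathlib

open Filter Topology ArithmeticFunction

/-- `ε * L(Λ, 1 + ε + i t)` tends to the residue of the pole at `1 + i t`. -/
lemma aux_limit (t : ℝ) :
    Tendsto (fun ε : ℝ => (ε : ℂ) * LSeries (fun n => ((vonMangoldt n : ℝ) : ℂ))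
      (1 + ε + Complex.I * t)) (𝓝[>] 0) (𝓝 (if t = 0 then 1 else 0)) := by
  have hu : IsUnit (1 : ZMod 1) := isUnit_one
  have hcont := vonMangoldt.continuousOn_LFunctionResidueClassAux (1 : ZMod 1)
  have heq := vonMangoldt.eqOn_LFunctionResidueClassAux hu
  have hres : (fun n => ((vonMangoldt.residueClass (1 : ZMod 1) n : ℝ) : ℂ))
      = (fun n => ((vonMangoldt n : ℝ) : ℂ)) := by
    funext n
    have h1 : n ∈ {n : ℕ | (n : ZMod 1) = 1} := Subsingleton.elim (α := ZMod 1) _ _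
    simp [vonMangoldt.residueClass, Set.indicator_of_mem h1]
  rw [hres] at heq
  set F := vonMangoldt.LFunctionResidueClassAux (1 : ZMod 1) with hF
  have h1 : Tendsto (fun ε : ℝ => F (1 + ε + Complex.I * t)) (𝓝[>] 0)
      (𝓝 (F (1 + (0 : ℝ) + Complex.I * t))) := by
    have hc : ContinuousWithinAt F {s | 1 ≤ s.re} (1 + (0 : ℝ) + Complex.I * t) :=
      hcont _ (by simp)
    refine hc.tendsto.comp ?_
    refine tendsto_nhdsWithin_iff.mpr ⟨?_, ?_⟩
    · refine Tendsto.mono_left ?_ nhdsWithin_le_nhds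
      exact Continuous.tendsto (by fun_prop) 0
    · filter_upwards [self_mem_nhdsWithin] with ε hε
      have : (0 : ℝ) < ε := hε
      simp [this.le]
  have h0 : Tendsto (fun ε : ℝ => (ε : ℂ)) (𝓝[>] 0) (𝓝 0) := by
    refine Tendsto.mono_left ?_ nhdsWithin_le_nhds
    simpa using Complex.continuous_ofReal.tendsto 0
  have h2 := h0.mul h1
  rw [zero_mul] at h2
  have h3 : Tendsto (fun ε : ℝ => (ε : ℂ) / (ε + Complex.I * t)) (𝓝[>] 0)
      (𝓝 (if t = 0 then 1 else 0)) := by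
    split_ifs with ht
    · refine tendsto_const_nhds.congr' ?_
      filter_upwards [self_mem_nhdsWithin] with ε hε
      have : (ε : ℂ) ≠ 0 := by exact_mod_cast (show (0 : ℝ) < ε from hε).ne'
      simp [ht, this]
    · have h4 : Tendsto (fun ε : ℝ => (ε : ℂ) + Complex.I * t) (𝓝[>] 0)
          (𝓝 (0 + Complex.I * t)) := h0.add tendsto_const_nhds
      have := h0.div h4 (by simp [ht])
      rw [zero_div] at this
      exact this
  have h5 := h2.add h3
  rw [zero_add] at h5
  refine h5.congr' ?_
  filter_upwards [self_mem_nhdsWithin] with ε hε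
  have hε' : (0 : ℝ) < ε := hε
  have := heq (show (1 + ε + Complex.I * t : ℂ) ∈ {s : ℂ | 1 < s.re} by simp [hε'])
  rw [this]
  simp only [Nat.totient_one, Nat.cast_one, inv_one]
  ring

lemma aux_trig (N : ℕ) (θ : ℝ) :
    ((((1 + Real.cos θ) / 2) ^ N : ℝ) : ℂ) =
      ∑ j ∈ Finset.range (2 * N + 1), ((Nat.choose (2 * N) j : ℂ) / 4 ^ N) *
        Complex.exp (Complex.I * (((j : ℝ) - N : ℝ)) * θ) := by
  have hz : Complex.exp (Complex.I * θ) ≠ 0 := Complex.exp_ne_zero _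
  have h1 : (((1 + Real.cos θ) / 2 : ℝ) : ℂ) =
      (Complex.exp (Complex.I * θ) + 1) ^ 2 / (4 * Complex.exp (Complex.I * θ)) := by
    push_cast
    rw [Complex.cos, neg_mul, Complex.exp_neg, mul_comm (θ : ℂ)]
    field_simp
    ring
  rw [Complex.ofReal_pow, h1, div_pow, ← pow_mul, add_pow, Finset.sum_div]
  refine Finset.sum_congr rfl fun j _ => ?_
  have : Complex.exp (Complex.I * (((j : ℝ) - N : ℝ)) * θ) =
      Complex.exp (Complex.I * θ) ^ j / Complex.exp (Complex.I * θ) ^ N := by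
    rw [← Complex.exp_nat_mul, ← Complex.exp_nat_mul, ← Complex.exp_sub]
    congr 1
    push_cast
    ring
  rw [this, mul_pow]
  field_simp
  simp

lemma aux_summable (ε : ℝ) (hε : 0 < ε) (g : ℕ → ℝ) (hg : ∀ n, |g n| ≤ 1) :
    Summable fun n : ℕ => ε * (vonMangoldt n / (n : ℝ) ^ (1 + ε) * g n) := by
  refine Summable.mul_left _ ?_
  have h := LSeriesSummable_vonMangoldt (s := ((1 + ε : ℝ) : ℂ)) (by simp [hε])
  refine Summable.of_norm_bounded h.norm fun n => ?_
  rcases eq_or_ne n 0 with rfl | hn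
  · simp
  · rw [LSeries.term_of_ne_zero hn, norm_mul, norm_div, norm_div,
      Complex.norm_natCast_cpow_of_pos (Nat.pos_of_ne_zero hn), Real.norm_eq_abs (g n)]
    have e2 : ‖(n : ℝ) ^ (1 + ε)‖ = (n : ℝ) ^ (1 + ε) :=
      Real.norm_of_nonneg (by positivity)
    rw [e2, Complex.norm_real, Complex.ofReal_re]
    exact mul_le_of_le_one_right (by positivity) (hg n)

lemma aux_mean (y α : ℝ) (hy : 0 < y) (N : ℕ) :
    Tendsto (fun ε : ℝ => ∑' n : ℕ, ε * (vonMangoldt n / (n : ℝ) ^ (1 + ε) *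
      ((1 + Real.cos (y * Real.log n + α)) / 2) ^ N)) (𝓝[>] 0)
      (𝓝 ((Nat.choose (2 * N) N : ℝ) / 4 ^ N)) := by
  have h1 : Tendsto (fun ε : ℝ => ∑ j ∈ Finset.range (2 * N + 1),
      ((Nat.choose (2 * N) j : ℂ) / 4 ^ N) * Complex.exp (Complex.I * (((j : ℝ) - N : ℝ)) * α) *
      ((ε : ℂ) * LSeries (fun n => ((vonMangoldt n : ℝ) : ℂ))
      (1 + ε + Complex.I * (-(((j : ℝ) - N) * y) : ℝ)))) (𝓝[>] 0)
      (𝓝 (∑ j ∈ Finset.range (2 * N + 1),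
      ((Nat.choose (2 * N) j : ℂ) / 4 ^ N) * Complex.exp (Complex.I * (((j : ℝ) - N : ℝ)) * α) *
        (if (-(((j : ℝ) - N) * y) : ℝ) = 0 then 1 else 0))) :=
    tendsto_finsetSum _ fun j _ => (aux_limit _).const_mul _
  have h2 : (∑ j ∈ Finset.range (2 * N + 1),
      ((Nat.choose (2 * N) j : ℂ) / 4 ^ N) * Complex.exp (Complex.I * (((j : ℝ) - N : ℝ)) * α) *
        (if (-(((j : ℝ) - N) * y) : ℝ) = 0 then 1 else 0)) =
      (((Nat.choose (2 * N) N : ℝ) / 4 ^ N : ℝ) : ℂ) := by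
    rw [Finset.sum_eq_single N]
    · simp
    · intro j _ hj
      have : (j : ℝ) - N ≠ 0 := sub_ne_zero.mpr (by exact_mod_cast hj)
      simp [this, hy.ne']
    · intro h
      exact absurd (Finset.mem_range.mpr (by omega)) h
  rw [h2] at h1
  have h3 := (Complex.continuous_re.tendsto _).comp h1
  rw [Complex.ofReal_re] at h3
  refine h3.congr' ?_
  filter_upwards [self_mem_nhdsWithin] with ε hε
  have hε' : (0 : ℝ) < ε := hε
  rw [Function.comp_apply, ← Complex.ofReal_re (∑' n : ℕ, _)]
  congr 1
  rw [Complex.ofReal_tsum]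
  have hs : ∀ j : ℕ, Summable (fun n => LSeries.term (fun n => ((vonMangoldt n : ℝ) : ℂ))
      (1 + ε + Complex.I * (-(((j : ℝ) - N) * y) : ℝ)) n) := fun j =>
    LSeriesSummable_vonMangoldt (by simp [hε'])
  simp only [LSeries, ← tsum_mul_left]
  rw [← Summable.tsum_finsetSum (fun j _ => ((hs j).mul_left _).mul_left _)]
  refine tsum_congr fun n => ?_
  rcases eq_or_ne n 0 with rfl | hn
  · simp
  rw [Complex.ofReal_mul, Complex.ofReal_mul, aux_trig, Finset.mul_sum, Finset.mul_sum]
  refine Finset.sum_congr rfl fun j _ => ?_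
  rw [LSeries.term_of_ne_zero hn]
  have hn' : (n : ℂ) ≠ 0 := by exact_mod_cast hn
  rw [Complex.ofReal_div, Complex.ofReal_cpow (by positivity), Complex.ofReal_natCast,
    Complex.cpow_add _ _ hn', Complex.cpow_def_of_ne_zero hn' (Complex.I * _)]
  have e1 : Complex.log (n : ℂ) = ((Real.log n : ℝ) : ℂ) := by
    rw [Complex.ofReal_log (by positivity), Complex.ofReal_natCast]
  rw [e1]
  have e2 : Complex.exp (Complex.I * (((j : ℝ) - N : ℝ)) * ((y * Real.log n + α : ℝ))) =
      Complex.exp (Complex.I * (((j : ℝ) - N : ℝ)) * α) /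
      Complex.exp ((Real.log n : ℝ) * (Complex.I * (-(((j : ℝ) - N) * y) : ℝ))) := by
    rw [← Complex.exp_sub]
    congr 1
    push_cast
    ring
  rw [e2]
  push_cast
  ring

lemma aux_dom (A : Set ℕ) (hA : Summable fun p : {p : ℕ // p.Prime ∧ p ∈ A} => (1 : ℝ) / (p : ℕ)) :
    Tendsto (fun ε : ℝ => ∑' n : ℕ, ε * (vonMangoldt n / (n : ℝ) ^ (1 + ε) *
      A.indicator 1 n)) (𝓝[>] 0) (𝓝 0) := by
  have hb1 := vonMangoldt.summable_residueClass_non_primes_div (1 : ZMod 1)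
  have hb2 : Summable ({p : ℕ | p.Prime ∧ p ∈ A}.indicator fun n : ℕ => (1 : ℝ) / n) :=
    summable_subtype_iff_indicator.mp hA
  have hlim : ∀ n : ℕ, Tendsto (fun ε : ℝ => ε * (vonMangoldt n / (n : ℝ) ^ (1 + ε) *
      A.indicator 1 n)) (𝓝[>] 0) (𝓝 0) := by
    intro n
    rcases eq_or_ne n 0 with rfl | hn
    · simp
    refine Tendsto.mono_left ?_ nhdsWithin_le_nhds
    have hn' : (0 : ℝ) < n := by positivity
    have hc : Continuous (fun ε : ℝ => ε * (vonMangoldt n / (n : ℝ) ^ (1 + ε) *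
      A.indicator 1 n)) := by
      refine continuous_id.mul (Continuous.mul (continuous_const.div ?_ ?_) continuous_const)
      · exact Continuous.rpow continuous_const (by fun_prop) (fun _ => Or.inl hn'.ne')
      · intro x; positivity
    simpa using hc.tendsto 0
  have key := tendsto_tsum_of_dominated_convergence (hb1.add hb2) hlim ?_
  · simpa using key
  have hev : ∀ᶠ ε : ℝ in 𝓝[>] 0, ε ∈ Set.Ioo (0 : ℝ) 1 := Ioo_mem_nhdsGT one_pos
  filter_upwards [hev] with ε ⟨hε0, hε1⟩ n
  rcases eq_or_ne n 0 with rfl | hn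
  · simp
    exact Set.indicator_nonneg (fun _ _ => by positivity) _
  have hn1 : (1 : ℝ) ≤ n := by exact_mod_cast Nat.pos_of_ne_zero hn
  have hn' : (0 : ℝ) < n := by positivity
  have hΛ : 0 ≤ vonMangoldt n := vonMangoldt_nonneg
  have hres : vonMangoldt.residueClass (1 : ZMod 1) n = vonMangoldt n := by
    have h1 : n ∈ {n : ℕ | (n : ZMod 1) = 1} := Subsingleton.elim (α := ZMod 1) _ _
    simp [vonMangoldt.residueClass, Set.indicator_of_mem h1]
  rw [hres]
  have hr1 : 1 ≤ (n : ℝ) ^ ε := Real.one_le_rpow hn1 hε0.le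
  have hsplit : (n : ℝ) ^ (1 + ε) = n * (n : ℝ) ^ ε := by
    rw [Real.rpow_add hn', Real.rpow_one]
  by_cases hnA : n ∈ A
  · have hnn : 0 ≤ ε * (vonMangoldt n / (n : ℝ) ^ (1 + ε) * A.indicator 1 n) := by
      simp only [Set.indicator_of_mem hnA, Pi.one_apply]
      positivity
    rw [Real.norm_of_nonneg hnn]
    simp only [Set.indicator_of_mem hnA, Pi.one_apply, mul_one, hsplit]
    by_cases hp : n.Prime
    · have hm : n ∈ {p : ℕ | p.Prime ∧ p ∈ A} := ⟨hp, hnA⟩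
      rw [Set.indicator_of_mem hm, if_pos hp, zero_div, zero_add, vonMangoldt_apply_prime hp]
      have : ε * Real.log n ≤ (n : ℝ) ^ ε := by
        have := Real.log_le_rpow_div hn'.le hε0
        rwa [le_div_iff₀ hε0, mul_comm] at this
      rw [← mul_div_assoc, div_le_div_iff₀ (by positivity) hn']
      nlinarith
    · have hm : n ∉ {p : ℕ | p.Prime ∧ p ∈ A} := fun h => hp h.1
      rw [Set.indicator_of_notMem hm, if_neg hp, add_zero]
      calc ε * (vonMangoldt n / (n * (n : ℝ) ^ ε))
          ≤ 1 * (vonMangoldt n / (n * 1)) := by gcongr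
        _ = _ := by ring
  · simp only [Set.indicator_of_notMem hnA, mul_zero, norm_zero]
    refine add_nonneg ?_ (Set.indicator_nonneg (fun _ _ => by positivity) _)
    split_ifs <;> positivity

lemma aux_main (y α K : ℝ) (hy : 0 < y) (hK₀ : 0 < K) (hK₁ : K < 1) :
    ¬ Summable fun p : {p : ℕ // p.Prime ∧ K < Real.cos (y * Real.log p + α)} =>
        (1 : ℝ) / (p : ℕ) := by
  intro H
  have hA := aux_dom {n : ℕ | K < Real.cos (y * Real.log n + α)} H
  set A : Set ℕ := {n : ℕ | K < Real.cos (y * Real.log n + α)} with hAdef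
  set r : ℝ := (1 + K) / 2 with hr
  have hr0 : 0 < r := by rw [hr]; linarith
  have hr1 : r < 1 := by rw [hr]; linarith
  have hN : ∀ N : ℕ, (Nat.choose (2 * N) N : ℝ) / 4 ^ N ≤ r ^ N := by
    intro N
    have hm := aux_mean y α hy N
    have h0 := (aux_mean y α hy 0).const_mul (r ^ N)
    have hsum := hA.add h0
    have hle := le_of_tendsto_of_tendsto hm hsum ?_
    · simpa using hle
    filter_upwards [self_mem_nhdsWithin] with ε hε
    have hε' : (0 : ℝ) < ε := hε
    have hc : ∀ n : ℕ, 0 ≤ (1 + Real.cos (y * Real.log n + α)) / 2 ∧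
        (1 + Real.cos (y * Real.log n + α)) / 2 ≤ 1 := fun n =>
      ⟨by linarith [Real.neg_one_le_cos (y * Real.log n + α)],
        by linarith [Real.cos_le_one (y * Real.log n + α)]⟩
    have hpow : ∀ M n : ℕ, |((1 + Real.cos (y * Real.log n + α)) / 2) ^ M| ≤ 1 := fun M n => by
      rw [abs_of_nonneg (pow_nonneg (hc n).1 M)]
      exact pow_le_one₀ (hc n).1 (hc n).2
    have s1 := aux_summable ε hε' _ (hpow N)
    have s2 := aux_summable ε hε' _ (hpow 0)
    have s3 := aux_summable ε hε' (A.indicator 1) (fun n => by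
      by_cases h : n ∈ A <;> simp [h])
    rw [← tsum_mul_left, ← s3.tsum_add (s2.mul_left (r ^ N))]
    refine s1.tsum_le_tsum (fun n => ?_) (s3.add (s2.mul_left (r ^ N)))
    have hw : 0 ≤ ε * (vonMangoldt n / (n : ℝ) ^ (1 + ε)) := by
      have : 0 ≤ vonMangoldt n := vonMangoldt_nonneg
      positivity
    have hpt : ((1 + Real.cos (y * Real.log n + α)) / 2) ^ N ≤ A.indicator 1 n + r ^ N := by
      by_cases h : n ∈ A
      · rw [Set.indicator_of_mem h, Pi.one_apply]
        have := pow_le_one₀ (n := N) (hc n).1 (hc n).2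
        have := pow_pos hr0 N
        linarith
      · rw [Set.indicator_of_notMem h, zero_add]
        have h' : Real.cos (y * Real.log n + α) ≤ K := not_lt.mp h
        refine pow_le_pow_left₀ (hc n).1 ?_ N
        rw [hr]; linarith
    calc _ = ε * (vonMangoldt n / (n : ℝ) ^ (1 + ε)) *
          ((1 + Real.cos (y * Real.log n + α)) / 2) ^ N := by ring
      _ ≤ ε * (vonMangoldt n / (n : ℝ) ^ (1 + ε)) * (A.indicator 1 n + r ^ N) := by gcongr
      _ = _ := by simp only [pow_zero]; ring
  have hlim : Tendsto (fun n : ℕ => (n : ℝ) * r ^ n) atTop (𝓝 0) :=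
    tendsto_self_mul_const_pow_of_lt_one hr0.le hr1
  obtain ⟨N, hN1, hN2⟩ := ((hlim.eventually (gt_mem_nhds (show (0 : ℝ) < 1 / 2 by norm_num))).and
    (eventually_gt_atTop 0)).exists
  have hb : (4 : ℝ) ^ N ≤ 2 * N * Nat.choose (2 * N) N := by
    have := Nat.four_pow_le_two_mul_self_mul_centralBinom N hN2
    rw [Nat.centralBinom_eq_two_mul_choose] at this
    exact_mod_cast this
  have h4 := hN N
  rw [div_le_iff₀ (by positivity)] at h4
  have hNp : (0 : ℝ) < N := by exact_mod_cast hN2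
  have h4p : (0 : ℝ) < 4 ^ N := by positivity
  nlinarith [mul_le_mul_of_nonneg_left h4 (show (0 : ℝ) ≤ 2 * N by positivity)]

/-- For `y > 0`, `0 ≤ α < 2π`, `0 < K < 1`, the sum of `1/p` over the primes with
`cos (y ln p + α) > K` diverges, and so does the sum over the primes with
`cos (y ln p + α) < -K`. -/
theorem not_summable_one_div_primes_cos (y α K : ℝ) (hy : 0 < y)
    (hα₀ : 0 ≤ α) (hα₁ : α < 2 * Real.pi) (hK₀ : 0 < K) (hK₁ : K < 1) :
    (¬ Summable fun p : {p : ℕ // p.Prime ∧ K < Real.cos (y * Real.log p + α)} =>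
        (1 : ℝ) / (p : ℕ)) ∧
    (¬ Summable fun p : {p : ℕ // p.Prime ∧ Real.cos (y * Real.log p + α) < -K} =>
        (1 : ℝ) / (p : ℕ)) := by
  refine ⟨aux_main y α K hy hK₀ hK₁, fun H => aux_main y (α + Real.pi) K hy hK₀ hK₁ ?_⟩
  have hiff : ∀ p : ℕ, (p.Prime ∧ K < Real.cos (y * Real.log p + (α + Real.pi))) ↔
      (p.Prime ∧ Real.cos (y * Real.log p + α) < -K) := fun p => by
    rw [← add_assoc, Real.cos_add_pi, lt_neg]
  exact (Equiv.subtypeEquivRight hiff).summable_iff.mpr H
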